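/- Let α ∈ C_loc^log, and let p, q ∈ 𝒫₀^log with 0 < q⁻ ≤ q⁺ < ∞ and p⁻ > 1. Fix ε > 0 and suppose that for each dyadic cube Q_{v,m} (v ∈ ℕ₀, m ∈ ℤⁿ) a measurable set E_{Q_{v,m}} ⊆ Q_{v,m} with |E_{Q_{v,m}}| > ε|Q_{v,m}| is given. Then there are constants c₁, c₂ > 0, independent of λ and of the sets E_{Q_{v,m}}, such that for every double sequence of complex numbers λ = {λ_{v,m}}_{v∈ℕ₀,m∈ℤⁿ}: c₁ · sup_{P dyadic, |P|≤1} ‖( |P|^{−1/p(·)} Σ_{m∈ℤⁿ} 2^{v(α(·)+n/2)} |λ_{v,m}| χ_{Q_{v,m}} χ_P )_{v≥v_P}‖_{ℓ^{q(·)}(L^{p(·)})} ≤ sup_{P dyadic, |P|≤1} ‖( |P|^{−1/p(·)} Σ_{m∈ℤⁿ} 2^{v(α(·)+n/2)} |λ_{v,m}| χ_{E_{Q_{v,m}}} χ_P )_{v≥v_P}‖_{ℓ^{q(·)}(L^{p(·)})} ≤ c₂ · sup_{P dyadic, |P|≤1} ‖( |P|^{−1/p(·)} Σ_{m∈ℤⁿ}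 2^{v(α(·)+n/2)} |λ_{v,m}| χ_{Q_{v,m}} χ_P )_{v≥v_P}‖_{ℓ^{q(·)}(L^{p(·)})}. -/

import Mathlib

/-! The upper bound holds with constant `1`, since `E_Q ⊆ Q` and all the functionals involved are
monotone. For the lower bound no maximal function or convolution inequality is needed: it follows
from a direct comparison of modulars on each dyadic cube.

Fix `P` and `μ` such that the modular of the `E`-functions divided by `μ` is at most `1`, with
terms `s_v`, and put `l_v = s_v + 2^{-v}`. Then `2^{-v} ≤ l_v ≤ 2` and `∑ l_v ≤ 3`, and for each
`v ≥ v_P` the modular of `H = f_v / (μ l_v^{1/q})` is at most `1` for the sets `E`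
(`exists_mixedNorm_le`). On a cube `Q` of level `v` every exponential factor of `H` has a base `t`
with `|log t| = O(1 + v)`, so local log-Hölder continuity makes `H` constant on `Q` up to a
bounded factor (`exists_rpow_le_local`).

Let `T` be the average of `H^p` over `E_Q` and let `h(x) = (1 + |x|)^{-n-1}`. For `x ∈ Q` some
`y ∈ E_Q` has `H(y)^{p(y)} < S := T + h(x)`, hence `H(x) ≤ C S^{1/p(y)}`. Since
`h(x) ≤ S ≤ C 2^{vn}`, log-Hölder continuity of `1/p` (local when `S ≥ 1`, decay at infinity when
`S < 1`) gives `S^{1/p(y)} ≤ C S^{1/p(x)}`, that is, `(H(x)/C)^{p(x)} ≤ T + h(x)`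
(`exists_cube_estimate`). Integrating over `Q` and summing over the cubes of level `v` bounds the
modular for the full cubes by `1/ε + ∫ h`, and `p` being bounded away from `0` allows this to be
normalised to `1` (`exists_level_estimate`).
-/

noncomputable section
open MeasureTheory ENNReal Set
open scoped ENNReal

abbrev Rn (n : ℕ) := EuclideanSpace ℝ (Fin n)

/-- The dyadic cube `Q_{v,m}` (with `v ∈ ℕ₀`, so `|Q_{v,m}| = 2^{-vn} ≤ 1`). -/
def dyadicCube (n : ℕ) (v : ℕ) (m : Fin n → ℤ) : Set (Rn n) :=
  {x | ∀ i, (m i : ℝ) ≤ 2 ^ v * x i ∧ 2 ^ v * x i < m i + 1}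

/-- The variable-exponent modular `ϱ_{p(·)}`. -/
def modularVE (n : ℕ) (p : Rn n → ℝ) (f : Rn n → ℝ≥0∞) : ℝ≥0∞ :=
  ∫⁻ x, f x ^ p x

/-- The Luxemburg norm `‖·‖_{p(·)}`. -/
def luxNorm (n : ℕ) (p : Rn n → ℝ) (f : Rn n → ℝ≥0∞) : ℝ≥0∞ :=
  sInf {μ : ℝ≥0∞ | 0 < μ ∧ modularVE n p (fun x => f x / μ) ≤ 1}

/-- The mixed modular `ϱ_{ℓ^{q(·)}(L^{p(·)})}` (valid when `q⁺ < ∞`). -/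
def mixedModular (n : ℕ) (p q : Rn n → ℝ) (f : ℕ → Rn n → ℝ≥0∞) : ℝ≥0∞ :=
  ∑' v, luxNorm n (fun x => p x / q x) (fun x => f v x ^ q x)

/-- The mixed norm `‖·‖_{ℓ^{q(·)}(L^{p(·)})}`. -/
def mixedNorm (n : ℕ) (p q : Rn n → ℝ) (f : ℕ → Rn n → ℝ≥0∞) : ℝ≥0∞ :=
  sInf {μ : ℝ≥0∞ | 0 < μ ∧ mixedModular n p q (fun v x => f v x / μ) ≤ 1}

/-- Local log-Hölder continuity with constant `c`. -/
def LocLogHolderWith (n : ℕ) (c : ℝ) (g : Rn n → ℝ) : Prop :=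
  ∀ x y : Rn n, x ≠ y → |g x - g y| ≤ c / Real.log (Real.exp 1 + 1 / ‖x - y‖)

/-- The log-Hölder decay condition. -/
def LogHolderDecay (n : ℕ) (g : Rn n → ℝ) : Prop :=
  ∃ g_inf c : ℝ, 0 < c ∧ ∀ x : Rn n, |g x - g_inf| ≤ c / Real.log (Real.exp 1 + ‖x‖)

/-- Global log-Hölder continuity. -/
def GlobLogHolder (n : ℕ) (g : Rn n → ℝ) : Prop :=
  (∃ c : ℝ, 0 < c ∧ LocLogHolderWith n c g) ∧ LogHolderDecay n g

/-- The quantity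
`sup_{P dyadic, |P|≤1} ‖( |P|^{-1/p(·)} Σ_m 2^{v(α(·)+n/2)} |λ_{v,m}| χ_{E_{Q_{v,m}}} χ_P )_{v ≥ v_P}‖_{ℓ^{q(·)}(L^{p(·)})}`
for a family of sets `E v m ⊆ Q_{v,m}`; here `|P|^{-1/p(x)} = 2^{vP·n/p(x)}`. -/
def seqNormE (n : ℕ) (p q α : Rn n → ℝ) (lam : ℕ → (Fin n → ℤ) → ℂ)
    (E : ℕ → (Fin n → ℤ) → Set (Rn n)) : ℝ≥0∞ :=
  ⨆ (vP : ℕ) (m0 : Fin n → ℤ),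
    mixedNorm n p q fun v => (dyadicCube n vP m0).indicator fun x =>
      (if vP ≤ v then (1 : ℝ≥0∞) else 0) * (2 : ℝ≥0∞) ^ ((vP : ℝ) * n / p x) *
        ∑' (m : Fin n → ℤ),
          (2 : ℝ≥0∞) ^ ((v : ℝ) * (α x + n / 2)) * ENNReal.ofReal ‖lam v m‖ *
            (E v m).indicator (fun _ => (1 : ℝ≥0∞)) x

/-! ### Dyadic cubes -/

lemma dyadicCube_eq_preimage (n v : ℕ) (m : Fin n → ℤ) :
    dyadicCube n v m = (WithLp.ofLp : Rn n → (Fin n → ℝ)) ⁻¹'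
      (Set.univ.pi fun i => Set.Ico ((m i : ℝ) / 2 ^ v) (((m i : ℝ) + 1) / 2 ^ v)) := by
  ext x
  have h2 : (0 : ℝ) < 2 ^ v := by positivity
  simp only [dyadicCube, Set.mem_ofPred_eq, Set.mem_preimage, Set.mem_pi, Set.mem_univ,
    true_implies, Set.mem_Ico, div_le_iff₀ h2, lt_div_iff₀ h2, mul_comm ((2 : ℝ) ^ v)]

lemma measurableSet_dyadicCube (n v : ℕ) (m : Fin n → ℤ) :
    MeasurableSet (dyadicCube n v m) := by
  rw [dyadicCube_eq_preimage]
  exact (PiLp.volume_preserving_ofLp (Fin n)).measurable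
    (MeasurableSet.univ_pi fun i => measurableSet_Ico)

lemma volume_dyadicCube (n v : ℕ) (m : Fin n → ℤ) :
    volume (dyadicCube n v m) = ENNReal.ofReal (((2 : ℝ) ^ v)⁻¹ ^ n) := by
  rw [dyadicCube_eq_preimage, (PiLp.volume_preserving_ofLp (Fin n)).measure_preimage
    (MeasurableSet.univ_pi fun i => measurableSet_Ico).nullMeasurableSet, Real.volume_pi_Ico]
  have : ∀ i : Fin n, ENNReal.ofReal (((m i : ℝ) + 1) / 2 ^ v - (m i : ℝ) / 2 ^ v)
      = ENNReal.ofReal (((2 : ℝ) ^ v)⁻¹) := by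
    intro i
    congr 1
    ring
  rw [Finset.prod_congr rfl fun i _ => this i, Finset.prod_const, Finset.card_univ,
    Fintype.card_fin, ENNReal.ofReal_pow (by positivity)]

lemma dyadicCube_unique {n v : ℕ} {m m' : Fin n → ℤ} {x : Rn n}
    (h : x ∈ dyadicCube n v m) (h' : x ∈ dyadicCube n v m') : m' = m := by
  funext i
  have h1 := h i
  have h2 := h' i
  have h3 : (m i : ℝ) < m' i + 1 := h1.1.trans_lt h2.2
  have h4 : (m' i : ℝ) < m i + 1 := h2.1.trans_lt h1.2
  norm_cast at h3 h4
  omega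

lemma iUnion_dyadicCube (n v : ℕ) : ⋃ m, dyadicCube n v m = Set.univ := by
  refine Set.eq_univ_of_forall fun x => Set.mem_iUnion.2 ⟨fun i => ⌊(2 : ℝ) ^ v * x i⌋, fun i => ?_⟩
  exact ⟨Int.floor_le _, Int.lt_floor_add_one _⟩

lemma pairwise_disjoint_dyadicCube (n v : ℕ) :
    Pairwise (Function.onFun Disjoint (dyadicCube n v)) := by
  intro m m' hne
  refine Set.disjoint_left.2 fun x hx hx' => hne ?_
  exact (dyadicCube_unique hx hx').symm

/-- Two dyadic cubes that meet are nested. -/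
lemma dyadicCube_subset {n v w : ℕ} (hwv : w ≤ v) {m M : Fin n → ℤ} {x : Rn n}
    (hx : x ∈ dyadicCube n v m) (hxP : x ∈ dyadicCube n w M) :
    dyadicCube n v m ⊆ dyadicCube n w M := by
  obtain ⟨k, rfl⟩ := Nat.exists_eq_add_of_le hwv
  intro y hy i
  have hk : (0 : ℝ) < 2 ^ k := by positivity
  have h1 := hx i
  have h2 := hxP i
  have h3 := hy i
  rw [pow_add] at h1 h3
  -- the endpoints of the larger cube are integers at the finer scale
  have a1 : (2 : ℝ) ^ k * M i < m i + 1 := by nlinarith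
  have a2 : (m i : ℝ) < 2 ^ k * (M i + 1) := by nlinarith
  have b1 : (2 : ℤ) ^ k * M i < m i + 1 := by exact_mod_cast a1
  have b2 : m i < (2 : ℤ) ^ k * (M i + 1) := by exact_mod_cast a2
  have c1 : (2 : ℝ) ^ k * M i ≤ m i := by exact_mod_cast Int.lt_add_one_iff.1 b1
  have c2 : (m i : ℝ) + 1 ≤ 2 ^ k * (M i + 1) := by exact_mod_cast Int.add_one_le_iff.2 b2
  constructor
  · refine le_of_mul_le_mul_left ?_ hk
    nlinarith
  · refine lt_of_mul_lt_mul_left ?_ hk.le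
    nlinarith

lemma norm_sub_le_of_mem {n v : ℕ} {m : Fin n → ℤ} {x y : Rn n} (hn : 1 ≤ n)
    (hx : x ∈ dyadicCube n v m) (hy : y ∈ dyadicCube n v m) :
    ‖x - y‖ ≤ n / 2 ^ v := by
  have h2 : (0 : ℝ) < 2 ^ v := by positivity
  have hn1 : (1 : ℝ) ≤ n := by exact_mod_cast hn
  rw [EuclideanSpace.norm_eq]
  refine Real.sqrt_le_iff.2 ⟨by positivity, ?_⟩
  have hi : ∀ i ∈ (Finset.univ : Finset (Fin n)), ‖(x - y) i‖ ^ 2 ≤ (1 / 2 ^ v : ℝ) ^ 2 := by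
    intro i _
    have h1 := hx i
    have h3 := hy i
    have : ‖(x - y) i‖ ≤ 1 / 2 ^ v := by
      rw [PiLp.sub_apply, Real.norm_eq_abs, le_div_iff₀ h2, ← abs_of_pos h2, ← abs_mul, abs_le]
      constructor <;> nlinarith
    gcongr
  refine (Finset.sum_le_sum hi).trans ?_
  rw [Finset.sum_const, Finset.card_univ, Fintype.card_fin, nsmul_eq_mul, div_pow, div_pow]
  rw [one_pow, mul_one_div]
  gcongr
  nlinarith

/-! ### Powers with log-Hölder exponents -/

/-- Changing the exponent of `t` from `b` to `a` costs a factor `t ^ (a - b) ≤ exp M`. -/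
lemma rpow_le_exp_mul_rpow {t : ℝ≥0∞} (h0 : t ≠ 0) (ht : t ≠ ∞) {a b M : ℝ}
    (h : |Real.log t.toReal| * |a - b| ≤ M) :
    t ^ a ≤ ENNReal.ofReal (Real.exp M) * t ^ b := by
  have hpos : 0 < t.toReal := ENNReal.toReal_pos h0 ht
  have e : a = (a - b) + b := by ring
  rw [e, ENNReal.rpow_add _ _ h0 ht]
  gcongr
  conv_lhs => rw [← ENNReal.ofReal_toReal ht]
  rw [ENNReal.ofReal_rpow_of_pos hpos, Real.rpow_def_of_pos hpos]
  refine ENNReal.ofReal_le_ofReal (Real.exp_le_exp.2 ?_)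
  refine (le_abs_self _).trans ?_
  rw [abs_mul]
  simpa using h

lemma one_le_log_exp_one_add {s : ℝ} (hs : 0 ≤ s) : 1 ≤ Real.log (Real.exp 1 + s) := by
  have : Real.log (Real.exp 1) ≤ Real.log (Real.exp 1 + s) :=
    Real.log_le_log (Real.exp_pos 1) (by linarith)
  simpa using this

/-- On a cube of side `2 ^ (-v)` the denominator in the local log-Hölder condition dominates
`v`, up to a constant depending on the dimension only. -/
lemma level_le_log {n v : ℕ} {m : Fin n → ℤ} {x y : Rn n} (hn : 1 ≤ n)
    (hx : x ∈ dyadicCube n v m) (hy : y ∈ dyadicCube n v m) (hxy : x ≠ y) :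
    (v : ℝ) ≤ 2 * (1 + Real.log n) * Real.log (Real.exp 1 + 1 / ‖x - y‖) := by
  have hd : 0 < ‖x - y‖ := norm_pos_iff.2 (sub_ne_zero.2 hxy)
  have h2 : (0 : ℝ) < 2 ^ v := by positivity
  have hn1 : (1 : ℝ) ≤ n := by exact_mod_cast hn
  have hL := one_le_log_exp_one_add (s := 1 / ‖x - y‖) (by positivity)
  have hln : 0 ≤ Real.log n := Real.log_nonneg hn1
  have h1 : (2 : ℝ) ^ v ≤ n * (Real.exp 1 + 1 / ‖x - y‖) := by
    have h3 : 2 ^ v / n ≤ 1 / ‖x - y‖ := by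
      rw [div_le_div_iff₀ (by positivity) hd]
      have := norm_sub_le_of_mem hn hx hy
      rw [le_div_iff₀ h2] at this
      linarith
    rw [div_le_iff₀ (by positivity)] at h3
    have := Real.exp_pos 1
    nlinarith
  have h4 := Real.log_le_log h2 h1
  rw [Real.log_pow, Real.log_mul (by positivity) (by positivity)] at h4
  have hl2 : (1 / 2 : ℝ) ≤ Real.log 2 := by linarith [Real.log_two_gt_d9]
  have hv : (0 : ℝ) ≤ v := by positivity
  nlinarith

/-- If `|log t|` grows at most linearly with the level `v`, then `t ^ g` is almost constant on
cubes of level `v`. -/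
lemma exists_rpow_le_local {n : ℕ} (hn : 1 ≤ n) {g : Rn n → ℝ}
    (hg : ∃ c : ℝ, 0 < c ∧ LocLogHolderWith n c g) {b N : ℝ} (hb : 0 ≤ b) (hN : 0 ≤ N) :
    ∃ C : ℝ≥0∞, C ≠ ∞ ∧ 1 ≤ C ∧ ∀ (v : ℕ) (m : Fin n → ℤ) (x y : Rn n),
      x ∈ dyadicCube n v m → y ∈ dyadicCube n v m → ∀ t : ℝ≥0∞, t ≠ 0 → t ≠ ∞ →
      |Real.log t.toReal| ≤ b + N * v → t ^ g x ≤ C * t ^ g y := by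
  obtain ⟨c, hc, hg⟩ := hg
  have hln : 0 ≤ Real.log n := Real.log_nonneg (by exact_mod_cast hn)
  refine ⟨ENNReal.ofReal (Real.exp (c * (b + N * (2 * (1 + Real.log n))))), ENNReal.ofReal_ne_top,
    ?_, ?_⟩
  · rw [ENNReal.one_le_ofReal]
    exact Real.one_le_exp (by positivity)
  intro v m x y hx hy t h0 ht hlog
  refine rpow_le_exp_mul_rpow h0 ht ?_
  by_cases hxy : x = y
  · subst hxy
    simp only [sub_self, abs_zero, mul_zero]
    positivity
  have h1 := level_le_log hn hx hy hxy
  have h2 := hg x y hxy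
  set L := Real.log (Real.exp 1 + 1 / ‖x - y‖)
  have hL : 1 ≤ L := one_le_log_exp_one_add (by positivity)
  have hLp : 0 < L := by linarith
  have h3 : |Real.log t.toReal| ≤ (b + N * (2 * (1 + Real.log n))) * L := by
    refine hlog.trans ?_
    have := mul_le_mul_of_nonneg_left h1 hN
    nlinarith
  calc |Real.log t.toReal| * |g x - g y|
      ≤ ((b + N * (2 * (1 + Real.log n))) * L) * (c / L) := by gcongr
    _ = c * (b + N * (2 * (1 + Real.log n))) := by field_simp

/-- If `|log t|` is controlled by `log (1 + ‖x‖)`, then the decay condition lets one move the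
exponent within cubes of side at most `1`. -/
lemma exists_rpow_le_decay {n : ℕ} (hn : 1 ≤ n) {g : Rn n → ℝ}
    (hg : LogHolderDecay n g) {N : ℝ} (hN : 0 ≤ N) :
    ∃ C : ℝ≥0∞, C ≠ ∞ ∧ 1 ≤ C ∧ ∀ (v : ℕ) (m : Fin n → ℤ) (x y : Rn n),
      x ∈ dyadicCube n v m → y ∈ dyadicCube n v m → ∀ t : ℝ≥0∞, t ≠ 0 → t ≠ ∞ →
      |Real.log t.toReal| ≤ N * Real.log (1 + ‖x‖) → t ^ g y ≤ C * t ^ g x := by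
  obtain ⟨g₀, c, hc, hg⟩ := hg
  have hl : 0 ≤ Real.log (1 + n) := Real.log_nonneg (by simp)
  refine ⟨ENNReal.ofReal (Real.exp (N * c * (2 + Real.log (1 + n)))), ENNReal.ofReal_ne_top,
    ?_, ?_⟩
  · rw [ENNReal.one_le_ofReal]
    exact Real.one_le_exp (by positivity)
  intro v m x y hx hy t h0 ht hlog
  refine rpow_le_exp_mul_rpow h0 ht ?_
  rw [abs_sub_comm]
  have hxy : ‖x‖ ≤ ‖y‖ + n := by
    have h1 := norm_sub_le_of_mem hn hx hy
    have h2 : (n : ℝ) / 2 ^ v ≤ n := div_le_self (by positivity) (one_le_pow₀ (by norm_num))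
    have h3 := norm_sub_norm_le x y
    linarith
  have he : 1 ≤ Real.exp 1 := Real.one_le_exp (by norm_num)
  have hX := one_le_log_exp_one_add (norm_nonneg x)
  have hY := one_le_log_exp_one_add (norm_nonneg y)
  have hgx := hg x
  have hgy := hg y
  have h1X : Real.log (1 + ‖x‖) ≤ Real.log (Real.exp 1 + ‖x‖) :=
    Real.log_le_log (by positivity) (by linarith)
  have h1Y : Real.log (1 + ‖x‖) ≤ (1 + Real.log (1 + n)) * Real.log (Real.exp 1 + ‖y‖) := by
    have h1 : Real.log (1 + ‖x‖) ≤ Real.log ((1 + n) * (Real.exp 1 + ‖y‖)) := by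
      refine Real.log_le_log (by positivity) ?_
      nlinarith [norm_nonneg y, Nat.cast_nonneg (α := ℝ) n]
    rw [Real.log_mul (by positivity) (by positivity)] at h1
    nlinarith
  have hl0 : 0 ≤ Real.log (1 + ‖x‖) := Real.log_nonneg (by simp)
  set X := Real.log (Real.exp 1 + ‖x‖)
  set Y := Real.log (Real.exp 1 + ‖y‖)
  set l := Real.log (1 + ‖x‖)
  have hd : |g x - g y| ≤ c / X + c / Y := by
    have : g x - g y = (g x - g₀) - (g y - g₀) := by ring
    rw [this]
    exact (abs_sub _ _).trans (add_le_add hgx hgy)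
  have k1 : l / X ≤ 1 := by rw [div_le_one (by linarith)]; exact h1X
  have k2 : l / Y ≤ 1 + Real.log (1 + n) := by rw [div_le_iff₀ (by linarith)]; exact h1Y
  calc |Real.log t.toReal| * |g x - g y|
      ≤ (N * l) * (c / X + c / Y) := by gcongr
    _ = N * c * (l / X + l / Y) := by ring
    _ ≤ N * c * (2 + Real.log (1 + n)) := by
      have : l / X + l / Y ≤ 2 + Real.log (1 + n) := by linarith
      gcongr

/-! ### The single-cube estimate -/

/-- The weight `|P|^{-1/p(x)} 2^{v(α(x)+n/2)}` for `P` of side `2 ^ (-w)`. -/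
def cubeWeight (n : ℕ) (p α : Rn n → ℝ) (w v : ℕ) (x : Rn n) : ℝ≥0∞ :=
  (2 : ℝ≥0∞) ^ ((w : ℝ) * n / p x) * (2 : ℝ≥0∞) ^ ((v : ℝ) * (α x + n / 2))

/-- An integrable function that absorbs the part of the single-cube estimate in which only the
decay condition at infinity is available. -/
def decayFn (n : ℕ) (x : Rn n) : ℝ≥0∞ := ENNReal.ofReal ((1 + ‖x‖) ^ (-((n : ℝ) + 1)))

lemma lintegral_decayFn_lt_top (n : ℕ) : ∫⁻ x, decayFn n x < ∞ := by
  refine finite_integral_one_add_norm (E := Rn n) ?_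
  simp

lemma decayFn_pos (n : ℕ) (x : Rn n) : 0 < decayFn n x :=
  ENNReal.ofReal_pos.2 (by positivity)

lemma decayFn_le_one (n : ℕ) (x : Rn n) : decayFn n x ≤ 1 := by
  refine ENNReal.ofReal_le_one.2 (Real.rpow_le_one_of_one_le_of_nonpos (by simp) ?_)
  have : (0 : ℝ) ≤ n := by positivity
  linarith

lemma abs_log_two_rpow (s : ℝ) (hs : 0 ≤ s) :
    |Real.log ((2 : ℝ≥0∞) ^ s).toReal| ≤ s := by
  rw [← ENNReal.toReal_rpow, ENNReal.toReal_ofNat, Real.log_rpow (by norm_num), abs_mul,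
    abs_of_nonneg hs, abs_of_nonneg (Real.log_nonneg (by norm_num))]
  have := Real.log_two_lt_d9
  nlinarith

lemma exists_cubeWeight_le {n : ℕ} (hn : 1 ≤ n) {p α : Rn n → ℝ}
    (hα : ∃ c : ℝ, 0 < c ∧ LocLogHolderWith n c α)
    (hp : ∃ c : ℝ, 0 < c ∧ LocLogHolderWith n c fun x => 1 / p x) :
    ∃ C : ℝ≥0∞, C ≠ ∞ ∧ 1 ≤ C ∧ ∀ (w v : ℕ) (m : Fin n → ℤ) (x y : Rn n), w ≤ v →
      x ∈ dyadicCube n v m → y ∈ dyadicCube n v m →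
      cubeWeight n p α w v x ≤ C * cubeWeight n p α w v y := by
  obtain ⟨C₁, hC₁, h1, H₁⟩ := exists_rpow_le_local hn hp le_rfl (Nat.cast_nonneg (α := ℝ) n)
  obtain ⟨C₂, hC₂, h2, H₂⟩ := exists_rpow_le_local hn hα le_rfl zero_le_one
  refine ⟨C₁ * C₂, ENNReal.mul_ne_top hC₁ hC₂, one_le_mul h1 h2, ?_⟩
  intro w v m x y hwv hx hy
  have hwv' : (w : ℝ) ≤ v := by exact_mod_cast hwv
  have e1 : ∀ z, (2 : ℝ≥0∞) ^ ((w : ℝ) * n / p z) = ((2 : ℝ≥0∞) ^ ((w : ℝ) * n)) ^ (1 / p z) := by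
    intro z
    rw [← ENNReal.rpow_mul, mul_one_div]
  have e2 : ∀ z, (2 : ℝ≥0∞) ^ ((v : ℝ) * (α z + n / 2))
      = ((2 : ℝ≥0∞) ^ (v : ℝ)) ^ (α z) * (2 : ℝ≥0∞) ^ ((v : ℝ) * (n / 2)) := by
    intro z
    rw [← ENNReal.rpow_mul, ← ENNReal.rpow_add _ _ (by norm_num) (by norm_num), mul_add]
  have k1 := H₁ v m x y hx hy ((2 : ℝ≥0∞) ^ ((w : ℝ) * n)) (by simp) (by simp)
    ((abs_log_two_rpow _ (by positivity)).trans (by nlinarith [Nat.cast_nonneg (α := ℝ) n]))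
  have k2 := H₂ v m x y hx hy ((2 : ℝ≥0∞) ^ (v : ℝ)) (by simp) (by simp)
    ((abs_log_two_rpow _ (by positivity)).trans (by simp))
  simp only [cubeWeight, e1, e2]
  calc _ ≤ (C₁ * ((2 : ℝ≥0∞) ^ ((w : ℝ) * n)) ^ (1 / p y)) *
        ((C₂ * ((2 : ℝ≥0∞) ^ (v : ℝ)) ^ (α y)) * (2 : ℝ≥0∞) ^ ((v : ℝ) * (n / 2))) := by gcongr
    _ = _ := by ring

/-- `|log S|` is controlled either by the level of the cube or by `log (1 + ‖x‖)`, according to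
whether `S ≥ 1` or `S < 1`; the two halves of the log-Hölder condition handle these cases. -/
lemma exists_rpow_inv_le {n : ℕ} (hn : 1 ≤ n) {p : Rn n → ℝ}
    (hp : GlobLogHolder n fun x => 1 / p x) {ε : ℝ} (hε : 0 < ε) :
    ∃ C : ℝ≥0∞, C ≠ ∞ ∧ 1 ≤ C ∧ ∀ (v : ℕ) (m : Fin n → ℤ) (x y : Rn n),
      x ∈ dyadicCube n v m → y ∈ dyadicCube n v m → ∀ S : ℝ≥0∞, decayFn n x ≤ S →
      S ≤ ENNReal.ofReal ((2 ^ v) ^ n * (1 / ε + 1)) → S ^ (1 / p y) ≤ C * S ^ (1 / p x) := by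
  have hb : 0 ≤ Real.log (1 / ε + 1) :=
    Real.log_nonneg (by have : 0 < 1 / ε := by positivity
                        linarith)
  obtain ⟨C₁, hC₁, h1, H₁⟩ := exists_rpow_le_local hn hp.1 hb (Nat.cast_nonneg (α := ℝ) n)
  obtain ⟨C₂, hC₂, h2, H₂⟩ := exists_rpow_le_decay hn hp.2 (N := (n : ℝ) + 1) (by positivity)
  refine ⟨C₁ * C₂, ENNReal.mul_ne_top hC₁ hC₂, one_le_mul h1 h2, ?_⟩
  intro v m x y hx hy S hS1 hS2
  have hS0 : S ≠ 0 := ((decayFn_pos n x).trans_le hS1).ne'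
  have hSt : S ≠ ∞ := (hS2.trans_lt ENNReal.ofReal_lt_top).ne
  have hSpos : 0 < S.toReal := ENNReal.toReal_pos hS0 hSt
  rcases le_total 1 S with h | h
  · have hS1' : 1 ≤ S.toReal := by simpa using ENNReal.toReal_mono hSt h
    have hS2' : S.toReal ≤ (2 ^ v) ^ n * (1 / ε + 1) :=
      ENNReal.toReal_le_of_le_ofReal (by positivity) hS2
    refine (H₁ v m y x hy hx S hS0 hSt ?_).trans ?_
    · rw [abs_of_nonneg (Real.log_nonneg hS1')]
      refine (Real.log_le_log hSpos hS2').trans ?_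
      rw [Real.log_mul (by positivity) (by positivity), Real.log_pow, Real.log_pow, add_comm]
      have := Real.log_two_lt_d9
      have hnv : 0 ≤ (n : ℝ) * v := by positivity
      nlinarith
    · gcongr
      exact le_mul_of_one_le_right' h2
  · have hS1' : S.toReal ≤ 1 := by simpa using ENNReal.toReal_mono ENNReal.one_ne_top h
    have hS2' : (1 + ‖x‖) ^ (-((n : ℝ) + 1)) ≤ S.toReal :=
      (ENNReal.ofReal_le_iff_le_toReal hSt).1 hS1
    refine (H₂ v m x y hx hy S hS0 hSt ?_).trans ?_
    · rw [abs_of_nonpos (Real.log_nonpos hSpos.le hS1')]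
      have := Real.log_le_log (by positivity) hS2'
      rw [Real.log_rpow (by positivity)] at this
      linarith
    · gcongr
      exact le_mul_of_one_le_left' h1

/-- The single-cube estimate. On a cube of level `v` the function
`H = a 2^{⋯} l^{-1/q}` is almost constant, so `H ^ p` at any point of the cube is bounded, after
division of `H` by a constant, by its average over any portion `E` of the cube, plus a summable
error. The requirement that the integral over `E` is at most `1` bounds the average by a fixed
power of `2 ^ v`. -/
lemma exists_cube_estimate {n : ℕ} (hn : 1 ≤ n) {p q α : Rn n → ℝ}
    (hp0 : ∃ c : ℝ, 0 < c ∧ ∀ x, c ≤ p x)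
    (hα : ∃ c : ℝ, 0 < c ∧ LocLogHolderWith n c α)
    (hp : GlobLogHolder n fun x => 1 / p x)
    (hq : ∃ c : ℝ, 0 < c ∧ LocLogHolderWith n c fun x => 1 / q x) {ε : ℝ} (hε : 0 < ε) :
    ∃ C : ℝ≥0∞, C ≠ ∞ ∧ 1 ≤ C ∧ ∀ (w v : ℕ) (m : Fin n → ℤ), w ≤ v →
      ∀ (a l : ℝ≥0∞), 2⁻¹ ^ v ≤ l → l ≤ 2 → ∀ E : Set (Rn n), MeasurableSet E →
      E ⊆ dyadicCube n v m → ENNReal.ofReal ε * volume (dyadicCube n v m) < volume E →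
      ∀ H : Rn n → ℝ≥0∞, (∀ x, H x = a * cubeWeight n p α w v x * l⁻¹ ^ (1 / q x)) →
      ∫⁻ y in E, H y ^ p y ≤ 1 → ∀ x ∈ dyadicCube n v m,
      H x ^ p x ≤ C ^ p x * ((∫⁻ y in E, H y ^ p y) / volume E + decayFn n x) := by
  obtain ⟨c, hc, hpc⟩ := hp0
  have hpp : ∀ x, 0 < p x := fun x => hc.trans_le (hpc x)
  obtain ⟨C₁, hC₁, h1, H₁⟩ := exists_cubeWeight_le hn hα hp.1
  obtain ⟨C₂, hC₂, h2, H₂⟩ := exists_rpow_le_local hn hq zero_le_one zero_le_one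
  obtain ⟨C₃, hC₃, h3, H₃⟩ := exists_rpow_inv_le hn hp hε
  refine ⟨C₁ * C₂ * C₃, by finiteness, one_le_mul (one_le_mul h1 h2) h3, ?_⟩
  intro w v m hwv a l hl1 hl2 E hE hEQ hvol H hH hint x hx
  have hl0 : l ≠ 0 := by
    rintro rfl
    simp at hl1
  have hlt : l ≠ ∞ := (hl2.trans_lt (by norm_num)).ne
  have hE0 : volume E ≠ 0 := (pos_of_gt hvol).ne'
  have hQt : volume (dyadicCube n v m) ≠ ∞ := by
    rw [volume_dyadicCube]
    exact ENNReal.ofReal_ne_top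
  have hEt : volume E ≠ ∞ := ne_top_of_le_ne_top hQt (measure_mono hEQ)
  set A := ∫⁻ y in E, H y ^ p y with hA
  set S := A / volume E + decayFn n x with hS
  have hAt : A ≠ ∞ := ne_top_of_le_ne_top ENNReal.one_ne_top hint
  have hAEt : A / volume E ≠ ∞ := ENNReal.div_ne_top hAt hE0
  -- some point of `E` does not exceed the average, strictly because `decayFn` is positive
  obtain ⟨y, hyE, hy⟩ : ∃ y ∈ E, H y ^ p y < S := by
    by_contra! hcon
    have h4 : S * volume E ≤ A := by
      rw [hA, ← setLIntegral_const]
      exact setLIntegral_mono' hE hcon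
    have h5 : A < S * volume E := by
      rw [← ENNReal.div_lt_iff (Or.inl hE0) (Or.inl hEt)]
      exact ENNReal.lt_add_right hAEt (decayFn_pos n x).ne'
    exact absurd h4 (not_le.2 h5)
  have hyQ := hEQ hyE
  have hS2 : S ≤ ENNReal.ofReal ((2 ^ v) ^ n * (1 / ε + 1)) := by
    have h4 : A / volume E ≤ ENNReal.ofReal ((2 ^ v) ^ n * (1 / ε)) := by
      refine (ENNReal.div_le_div hint hvol.le).trans ?_
      rw [volume_dyadicCube, ← ENNReal.ofReal_mul hε.le, one_div,
        ← ENNReal.ofReal_inv_of_pos (by positivity)]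
      refine ENNReal.ofReal_le_ofReal (le_of_eq ?_)
      rw [mul_inv, inv_pow, inv_inv, one_div, mul_comm]
    have h5 : decayFn n x ≤ ENNReal.ofReal ((2 ^ v) ^ n) := by
      refine (decayFn_le_one n x).trans ?_
      rw [ENNReal.one_le_ofReal]
      exact one_le_pow₀ (one_le_pow₀ (by norm_num))
    rw [mul_add, mul_one, ENNReal.ofReal_add (by positivity) (by positivity)]
    exact add_le_add h4 h5
  have hlog : |Real.log (l⁻¹).toReal| ≤ 1 + 1 * (v : ℝ) := by
    have hlp : 0 < l.toReal := ENNReal.toReal_pos hl0 hlt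
    have u1 : l.toReal ≤ 2 := by simpa using ENNReal.toReal_mono (by norm_num) hl2
    have u2 : (2 : ℝ)⁻¹ ^ v ≤ l.toReal := by simpa using ENNReal.toReal_mono hlt hl1
    have u3 := Real.log_le_log hlp u1
    have u4 := Real.log_le_log (by positivity) u2
    rw [Real.log_pow, Real.log_inv] at u4
    have := Real.log_two_lt_d9
    have hv : (0 : ℝ) ≤ v := by positivity
    rw [ENNReal.toReal_inv, Real.log_inv, abs_neg, abs_le]
    constructor <;> nlinarith
  have k1 : H x ≤ C₁ * C₂ * H y := by
    rw [hH x, hH y]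
    calc a * cubeWeight n p α w v x * l⁻¹ ^ (1 / q x)
        ≤ a * (C₁ * cubeWeight n p α w v y) * (C₂ * l⁻¹ ^ (1 / q y)) := by
          gcongr
          · exact H₁ w v m x y hwv hx hyQ
          · exact H₂ v m x y hx hyQ l⁻¹ (by simpa using hlt) (by simpa using hl0) hlog
      _ = _ := by ring
  have k2 : H y ≤ S ^ (1 / p y) := by
    rw [one_div, ENNReal.le_rpow_inv_iff (hpp y)]
    exact hy.le
  have k3 : H x ≤ C₁ * C₂ * C₃ * S ^ (1 / p x) := by
    calc H x ≤ C₁ * C₂ * (C₃ * S ^ (1 / p x)) :=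
          k1.trans (by gcongr; exact k2.trans (H₃ v m x y hx hyQ S le_add_self hS2))
      _ = _ := by ring
  calc H x ^ p x ≤ (C₁ * C₂ * C₃ * S ^ (1 / p x)) ^ p x :=
        ENNReal.rpow_le_rpow k3 (hpp x).le
    _ = (C₁ * C₂ * C₃) ^ p x * S := by
        rw [ENNReal.mul_rpow_of_nonneg _ _ (hpp x).le, ← ENNReal.rpow_mul,
          one_div_mul_cancel (hpp x).ne', ENNReal.rpow_one]

/-! ### Estimate at a fixed level -/

/-- The function of level `v` entering `seqNormE` for the cube `P = Q_{w,m₀}`. -/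
def levelFn (n : ℕ) (p α : Rn n → ℝ) (lam : ℕ → (Fin n → ℤ) → ℂ)
    (E : ℕ → (Fin n → ℤ) → Set (Rn n)) (w : ℕ) (m0 : Fin n → ℤ) (v : ℕ) : Rn n → ℝ≥0∞ :=
  (dyadicCube n w m0).indicator fun x =>
      (if w ≤ v then (1 : ℝ≥0∞) else 0) * (2 : ℝ≥0∞) ^ ((w : ℝ) * n / p x) *
        ∑' (m : Fin n → ℤ),
          (2 : ℝ≥0∞) ^ ((v : ℝ) * (α x + n / 2)) * ENNReal.ofReal ‖lam v m‖ *
            (E v m).indicator (fun _ => (1 : ℝ≥0∞)) x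

lemma seqNormE_eq (n : ℕ) (p q α : Rn n → ℝ) (lam : ℕ → (Fin n → ℤ) → ℂ)
    (E : ℕ → (Fin n → ℤ) → Set (Rn n)) :
    seqNormE n p q α lam E =
      ⨆ (w : ℕ) (m0 : Fin n → ℤ), mixedNorm n p q (levelFn n p α lam E w m0) := rfl

lemma levelFn_of_mem {n : ℕ} {p α : Rn n → ℝ} {lam : ℕ → (Fin n → ℤ) → ℂ}
    {E : ℕ → (Fin n → ℤ) → Set (Rn n)} (hE : ∀ v m, E v m ⊆ dyadicCube n v m)
    {w v : ℕ} (hwv : w ≤ v) {m0 m : Fin n → ℤ} {x : Rn n} (hP : x ∈ dyadicCube n w m0)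
    (hx : x ∈ E v m) :
    levelFn n p α lam E w m0 v x = ENNReal.ofReal ‖lam v m‖ * cubeWeight n p α w v x := by
  rw [levelFn, Set.indicator_of_mem hP, tsum_eq_single m, Set.indicator_of_mem hx, if_pos hwv,
    cubeWeight]
  · ring
  · intro m' hm'
    rw [Set.indicator_of_notMem, mul_zero]
    exact fun h => hm' (dyadicCube_unique (hE v m hx) (hE v m' h))

lemma levelFn_of_lt {n : ℕ} {p α : Rn n → ℝ} {lam : ℕ → (Fin n → ℤ) → ℂ}
    {E : ℕ → (Fin n → ℤ) → Set (Rn n)} {w v : ℕ} (hvw : v < w) (m0 : Fin n → ℤ) (x : Rn n) :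
    levelFn n p α lam E w m0 v x = 0 := by
  simp [levelFn, not_le.2 hvw]

lemma levelFn_mono {n : ℕ} {p α : Rn n → ℝ} {lam : ℕ → (Fin n → ℤ) → ℂ}
    {E F : ℕ → (Fin n → ℤ) → Set (Rn n)} (hEF : ∀ v m, E v m ⊆ F v m)
    (w : ℕ) (m0 : Fin n → ℤ) (v : ℕ) (x : Rn n) :
    levelFn n p α lam E w m0 v x ≤ levelFn n p α lam F w m0 v x := by
  refine Set.indicator_le_indicator ?_
  gcongr with m
  exact hEF v m

lemma lintegral_eq_tsum_cubes (n v : ℕ) (f : Rn n → ℝ≥0∞) :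
    ∫⁻ x, f x = ∑' m, ∫⁻ x in dyadicCube n v m, f x := by
  rw [← lintegral_iUnion (measurableSet_dyadicCube n v) (pairwise_disjoint_dyadicCube n v),
    iUnion_dyadicCube, setLIntegral_univ]

/-- At a fixed level, a bound on the modular for the sets `E` gives one for the full cubes. The
modular for the full cubes is at most `1/ε + ∫ decayFn`, summing the single-cube estimates; since
`p` is bounded below, enlarging the norm constant brings it down to `1`. -/
lemma exists_level_estimate {n : ℕ} (hn : 1 ≤ n) {p q α : Rn n → ℝ}
    (hp0 : ∃ c : ℝ, 0 < c ∧ ∀ x, c ≤ p x)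
    (hα : ∃ c : ℝ, 0 < c ∧ LocLogHolderWith n c α)
    (hp : GlobLogHolder n fun x => 1 / p x)
    (hq : ∃ c : ℝ, 0 < c ∧ LocLogHolderWith n c fun x => 1 / q x) {ε : ℝ} (hε : 0 < ε) :
    ∃ K : ℝ≥0∞, K ≠ ∞ ∧ 1 ≤ K ∧ ∀ (lam : ℕ → (Fin n → ℤ) → ℂ)
      (E : ℕ → (Fin n → ℤ) → Set (Rn n)),
      (∀ v m, MeasurableSet (E v m)) → (∀ v m, E v m ⊆ dyadicCube n v m) →
      (∀ v m, ENNReal.ofReal ε * volume (dyadicCube n v m) < volume (E v m)) →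
      ∀ (w v : ℕ) (m0 : Fin n → ℤ), w ≤ v → ∀ μ l : ℝ≥0∞, 2⁻¹ ^ v ≤ l → l ≤ 2 →
      ∫⁻ x, (levelFn n p α lam E w m0 v x / μ * l⁻¹ ^ (1 / q x)) ^ p x ≤ 1 →
      ∫⁻ x, (levelFn n p α lam (dyadicCube n) w m0 v x / μ * l⁻¹ ^ (1 / q x) / K) ^ p x ≤ 1 := by
  obtain ⟨C, hC, hC1, HC⟩ := exists_cube_estimate hn hp0 hα hp hq hε
  obtain ⟨c, hc, hpc⟩ := hp0
  have hpp : ∀ x, 0 < p x := fun x => hc.trans_le (hpc x)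
  have hC0 : C ≠ 0 := (zero_lt_one.trans_le hC1).ne'
  have hε0 : ENNReal.ofReal ε ≠ 0 := (ENNReal.ofReal_pos.2 hε).ne'
  set κ : ℝ≥0∞ := (ENNReal.ofReal ε)⁻¹ + (∫⁻ x, decayFn n x) + 1 with hκ
  have hκ1 : 1 ≤ κ := le_add_self
  have hκ0 : κ ≠ 0 := (zero_lt_one.trans_le hκ1).ne'
  have hκt : κ ≠ ∞ := by
    have := (lintegral_decayFn_lt_top n).ne
    finiteness
  refine ⟨C * κ ^ (1 / c), by finiteness, one_le_mul hC1 (ENNReal.one_le_rpow hκ1 (by positivity)),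
    ?_⟩
  intro lam E hEm hEQ hvol w v m0 hwv μ l hl1 hl2 hint
  set F := levelFn n p α lam (dyadicCube n) w m0 v with hF
  set G := levelFn n p α lam E w m0 v with hG
  have hcube : ∀ m, ∫⁻ x in dyadicCube n v m, (F x / μ * l⁻¹ ^ (1 / q x) / C) ^ p x ≤
      (ENNReal.ofReal ε)⁻¹ * (∫⁻ x in dyadicCube n v m, (G x / μ * l⁻¹ ^ (1 / q x)) ^ p x)
        + ∫⁻ x in dyadicCube n v m, decayFn n x := by
    intro m
    by_cases hne : ∃ z ∈ dyadicCube n v m, z ∈ dyadicCube n w m0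
    · obtain ⟨z, hz, hzP⟩ := hne
      have hsub := dyadicCube_subset hwv hz hzP
      set H : Rn n → ℝ≥0∞ := fun x =>
        ENNReal.ofReal ‖lam v m‖ / μ * cubeWeight n p α w v x * l⁻¹ ^ (1 / q x) with hH
      have hFH : ∀ x ∈ dyadicCube n v m, F x / μ * l⁻¹ ^ (1 / q x) = H x := by
        intro x hx
        rw [hF, levelFn_of_mem (fun _ _ => subset_rfl) hwv (hsub hx) hx, hH, div_eq_mul_inv]
        simp only [div_eq_mul_inv]
        ring
      have hGH : ∀ x ∈ E v m, G x / μ * l⁻¹ ^ (1 / q x) = H x := by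
        intro x hx
        rw [hG, levelFn_of_mem hEQ hwv (hsub (hEQ v m hx)) hx, hH, div_eq_mul_inv]
        simp only [div_eq_mul_inv]
        ring
      have hA : ∫⁻ y in E v m, H y ^ p y ≤
          ∫⁻ x in dyadicCube n v m, (G x / μ * l⁻¹ ^ (1 / q x)) ^ p x := by
        calc ∫⁻ y in E v m, H y ^ p y
            = ∫⁻ x in E v m, (G x / μ * l⁻¹ ^ (1 / q x)) ^ p x :=
              setLIntegral_congr_fun (hEm v m) fun x hx => by simp only [hGH x hx]
          _ ≤ _ := lintegral_mono_set (hEQ v m)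
      have hA1 : ∫⁻ y in E v m, H y ^ p y ≤ 1 :=
        (hA.trans (setLIntegral_le_lintegral _ _)).trans hint
      have key := HC w v m hwv _ l hl1 hl2 (E v m) (hEm v m) (hEQ v m) (hvol v m) H
        (fun _ => rfl) hA1
      have hvE0 : volume (E v m) ≠ 0 := (pos_of_gt (hvol v m)).ne'
      have hratio : volume (dyadicCube n v m) / volume (E v m) ≤ (ENNReal.ofReal ε)⁻¹ := by
        rw [ENNReal.div_le_iff_le_mul (Or.inl hvE0) (Or.inr (by simp)), mul_comm,
          ← div_eq_mul_inv, ENNReal.le_div_iff_mul_le (Or.inl hε0) (Or.inl ENNReal.ofReal_ne_top),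
          mul_comm]
        exact (hvol v m).le
      have hmeasd : Measurable (decayFn n) := by
        unfold decayFn
        fun_prop
      calc ∫⁻ x in dyadicCube n v m, (F x / μ * l⁻¹ ^ (1 / q x) / C) ^ p x
          ≤ ∫⁻ x in dyadicCube n v m,
              ((∫⁻ y in E v m, H y ^ p y) / volume (E v m) + decayFn n x) := by
            refine setLIntegral_mono' (measurableSet_dyadicCube n v m) fun x hx => ?_
            rw [hFH x hx, ENNReal.div_rpow_of_nonneg _ _ (hpp x).le]
            refine ENNReal.div_le_of_le_mul' ?_
            exact key x hx
        _ = (∫⁻ y in E v m, H y ^ p y) / volume (E v m) * volume (dyadicCube n v m)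
              + ∫⁻ x in dyadicCube n v m, decayFn n x := by
            rw [lintegral_add_right _ hmeasd, setLIntegral_const]
        _ = volume (dyadicCube n v m) / volume (E v m) * (∫⁻ y in E v m, H y ^ p y)
              + ∫⁻ x in dyadicCube n v m, decayFn n x := by
            simp only [div_eq_mul_inv]
            ring
        _ ≤ _ := by gcongr
    · push Not at hne
      have : ∫⁻ x in dyadicCube n v m, (F x / μ * l⁻¹ ^ (1 / q x) / C) ^ p x = 0 := by
        rw [← lintegral_zero (μ := volume.restrict (dyadicCube n v m))]
        refine setLIntegral_congr_fun (measurableSet_dyadicCube n v m) fun x hx => ?_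
        have : F x = 0 := Set.indicator_of_notMem (hne x hx) _
        simp [this, hpp x]
      rw [this]
      exact zero_le
  have htot : ∫⁻ x, (F x / μ * l⁻¹ ^ (1 / q x) / C) ^ p x ≤ κ := by
    rw [lintegral_eq_tsum_cubes n v]
    refine (ENNReal.tsum_le_tsum hcube).trans ?_
    rw [ENNReal.tsum_add, ENNReal.tsum_mul_left, ← lintegral_eq_tsum_cubes n v,
      ← lintegral_eq_tsum_cubes n v]
    refine (?_ : _ ≤ (ENNReal.ofReal ε)⁻¹ + ∫⁻ x, decayFn n x).trans le_self_add
    gcongr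
    exact mul_le_of_le_one_right' hint
  calc ∫⁻ x, (F x / μ * l⁻¹ ^ (1 / q x) / (C * κ ^ (1 / c))) ^ p x
      ≤ ∫⁻ x, κ⁻¹ * (F x / μ * l⁻¹ ^ (1 / q x) / C) ^ p x := by
        refine lintegral_mono fun x => ?_
        have e : F x / μ * l⁻¹ ^ (1 / q x) / (C * κ ^ (1 / c))
            = (F x / μ * l⁻¹ ^ (1 / q x) / C) / κ ^ (1 / c) := by
          simp only [div_eq_mul_inv]
          rw [ENNReal.mul_inv (Or.inl hC0) (Or.inl hC)]
          ring
        have hk : κ ≤ (κ ^ (1 / c)) ^ p x := by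
          rw [← ENNReal.rpow_mul]
          refine (ENNReal.rpow_one κ).symm.le.trans (ENNReal.rpow_le_rpow_of_exponent_le hκ1 ?_)
          rw [one_div_mul_eq_div, one_le_div hc]
          exact hpc x
        rw [e, ENNReal.div_rpow_of_nonneg _ _ (hpp x).le, div_eq_mul_inv, mul_comm]
        gcongr
    _ = κ⁻¹ * ∫⁻ x, (F x / μ * l⁻¹ ^ (1 / q x) / C) ^ p x :=
        lintegral_const_mul' _ _ (ENNReal.inv_ne_top.2 hκ0)
    _ ≤ κ⁻¹ * κ := by gcongr
    _ = 1 := ENNReal.inv_mul_cancel hκ0 hκt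

/-! ### The mixed norm -/

lemma modularVE_le_of_luxNorm_lt {n : ℕ} {r : Rn n → ℝ} (hr : ∀ x, 0 ≤ r x) {f : Rn n → ℝ≥0∞}
    {l : ℝ≥0∞} (h : luxNorm n r f < l) : modularVE n r (fun x => f x / l) ≤ 1 := by
  obtain ⟨l', ⟨-, h1⟩, h2⟩ := sInf_lt_iff.1 h
  refine le_trans (lintegral_mono fun x => ?_) h1
  exact ENNReal.rpow_le_rpow (ENNReal.div_le_div le_rfl h2.le) (hr x)

lemma luxNorm_mono {n : ℕ} {r : Rn n → ℝ} (hr : ∀ x, 0 ≤ r x) {f g : Rn n → ℝ≥0∞}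
    (h : ∀ x, f x ≤ g x) : luxNorm n r f ≤ luxNorm n r g := by
  refine sInf_le_sInf fun l hl => ⟨hl.1, le_trans (lintegral_mono fun x => ?_) hl.2⟩
  exact ENNReal.rpow_le_rpow (ENNReal.div_le_div (h x) le_rfl) (hr x)

lemma mixedNorm_mono {n : ℕ} {p q : Rn n → ℝ} (hp : ∀ x, 0 < p x) (hq : ∀ x, 0 < q x)
    {f g : ℕ → Rn n → ℝ≥0∞} (h : ∀ v x, f v x ≤ g v x) :
    mixedNorm n p q f ≤ mixedNorm n p q g := by
  refine sInf_le_sInf fun l hl => ⟨hl.1, le_trans (ENNReal.tsum_le_tsum fun v => ?_) hl.2⟩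
  refine luxNorm_mono (fun x => (div_pos (hp x) (hq x)).le) fun x => ?_
  exact ENNReal.rpow_le_rpow (ENNReal.div_le_div (h v x) le_rfl) (hq x).le

lemma rpow_div_rpow_eq (X Y : ℝ≥0∞) {a b : ℝ} (hb : 0 < b) :
    (X ^ b / Y) ^ (a / b) = (X * Y⁻¹ ^ (1 / b)) ^ a := by
  have e : X ^ b / Y = (X * Y⁻¹ ^ (1 / b)) ^ b := by
    rw [ENNReal.mul_rpow_of_nonneg _ _ hb.le, ← ENNReal.rpow_mul, one_div_mul_cancel hb.ne',
      ENNReal.rpow_one, div_eq_mul_inv]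
  rw [e, ← ENNReal.rpow_mul, mul_div_cancel₀ _ hb.ne']

/-- The mixed norms for a fixed `P`. If `s_v` are the terms of the modular for the sets `E`, then
`l_v = s_v + 2 ^ (-v)` has sum at most `3` and satisfies `2 ^ (-v) ≤ l_v ≤ 2`, so that
`l_v ^ (-1/q)` is almost constant on cubes of level `v`. -/
lemma exists_mixedNorm_le {n : ℕ} (hn : 1 ≤ n) {p q α : Rn n → ℝ}
    (hp0 : ∃ c : ℝ, 0 < c ∧ ∀ x, c ≤ p x) (hq0 : ∃ c : ℝ, 0 < c ∧ ∀ x, c ≤ q x)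
    (hα : ∃ c : ℝ, 0 < c ∧ LocLogHolderWith n c α)
    (hp : GlobLogHolder n fun x => 1 / p x)
    (hq : ∃ c : ℝ, 0 < c ∧ LocLogHolderWith n c fun x => 1 / q x) {ε : ℝ} (hε : 0 < ε) :
    ∃ C : ℝ≥0∞, C ≠ ∞ ∧ 1 ≤ C ∧ ∀ (lam : ℕ → (Fin n → ℤ) → ℂ)
      (E : ℕ → (Fin n → ℤ) → Set (Rn n)),
      (∀ v m, MeasurableSet (E v m)) → (∀ v m, E v m ⊆ dyadicCube n v m) →
      (∀ v m, ENNReal.ofReal ε * volume (dyadicCube n v m) < volume (E v m)) →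
      ∀ (w : ℕ) (m0 : Fin n → ℤ),
      mixedNorm n p q (levelFn n p α lam (dyadicCube n) w m0) ≤
        C * mixedNorm n p q (levelFn n p α lam E w m0) := by
  obtain ⟨K, hK, hK1, HK⟩ := exists_level_estimate hn hp0 hα hp hq hε
  obtain ⟨c, hc, hpc⟩ := hp0
  obtain ⟨d, hd, hqd⟩ := hq0
  have hpp : ∀ x, 0 < p x := fun x => hc.trans_le (hpc x)
  have hqp : ∀ x, 0 < q x := fun x => hd.trans_le (hqd x)
  have hpq : ∀ x, 0 < p x / q x := fun x => div_pos (hpp x) (hqp x)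
  have hK0 : K ≠ 0 := (zero_lt_one.trans_le hK1).ne'
  set τ : ℝ≥0∞ := 3 ^ (1 / d) with hτ
  have hτ1 : 1 ≤ τ := ENNReal.one_le_rpow (by norm_num) (by positivity)
  have hτ0 : τ ≠ 0 := (zero_lt_one.trans_le hτ1).ne'
  have hτt : τ ≠ ∞ := ENNReal.rpow_ne_top_of_nonneg (by positivity) (by norm_num)
  have hKτ0 : K * τ ≠ 0 := mul_ne_zero hK0 hτ0
  refine ⟨K * τ, by finiteness, one_le_mul hK1 hτ1, ?_⟩
  intro lam E hEm hEQ hvol w m0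
  rw [mul_comm, ← ENNReal.div_le_iff_le_mul (Or.inl hKτ0) (Or.inl (by finiteness))]
  refine le_sInf fun μ hμ => ?_
  rw [ENNReal.div_le_iff_le_mul (Or.inl hKτ0) (Or.inl (by finiteness))]
  obtain ⟨hμ0, hμ1⟩ := hμ
  refine sInf_le ⟨ENNReal.mul_pos hμ0.ne' hKτ0, ?_⟩
  set s : ℕ → ℝ≥0∞ := fun v => luxNorm n (fun x => p x / q x)
    (fun x => (levelFn n p α lam E w m0 v x / μ) ^ q x) with hs
  have hs1 : ∑' v, s v ≤ 1 := hμ1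
  have hsv : ∀ v, s v ≤ 1 := fun v => (ENNReal.le_tsum v).trans hs1
  set l : ℕ → ℝ≥0∞ := fun v => s v + 2⁻¹ ^ v with hl
  have hpow0 : ∀ v : ℕ, (2⁻¹ : ℝ≥0∞) ^ v ≠ 0 := fun v => pow_ne_zero _ (by norm_num)
  have hl1 : ∀ v, 2⁻¹ ^ v ≤ l v := fun v => le_add_self
  have hl0 : ∀ v, l v ≠ 0 := fun v => (lt_of_lt_of_le (pos_iff_ne_zero.2 (hpow0 v)) (hl1 v)).ne'
  have hl2 : ∀ v, l v ≤ 2 := by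
    intro v
    rw [← one_add_one_eq_two]
    exact add_le_add (hsv v) (pow_le_one₀ zero_le (by norm_num))
  have hterm : ∀ v, luxNorm n (fun x => p x / q x)
      (fun x => (levelFn n p α lam (dyadicCube n) w m0 v x / (μ * (K * τ))) ^ q x) ≤ l v / 3 := by
    intro v
    refine sInf_le ⟨ENNReal.div_pos (hl0 v) (by norm_num), ?_⟩
    rcases lt_or_ge v w with hvw | hwv
    · simp [modularVE, levelFn_of_lt hvw, hqp, hpq]
    have hlt : s v < l v :=
      ENNReal.lt_add_right ((hsv v).trans_lt ENNReal.one_lt_top).ne (hpow0 v)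
    have hE1 := modularVE_le_of_luxNorm_lt (fun x => (hpq x).le) hlt
    simp only [modularVE, rpow_div_rpow_eq _ _ (hqp _)] at hE1 ⊢
    refine le_trans (lintegral_mono fun x => ?_)
      (HK lam E hEm hEQ hvol w v m0 hwv μ (l v) (hl1 v) (hl2 v) hE1)
    refine ENNReal.rpow_le_rpow ?_ (hpp x).le
    have h3 : (l v / 3)⁻¹ ^ (1 / q x) ≤ τ * (l v)⁻¹ ^ (1 / q x) := by
      rw [ENNReal.inv_div (Or.inl (by norm_num)) (Or.inl (by norm_num)), div_eq_mul_inv,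
        ENNReal.mul_rpow_of_nonneg _ _ (one_div_pos.2 (hqp x)).le]
      gcongr
      exact ENNReal.rpow_le_rpow_of_exponent_le (by norm_num) (one_div_le_one_div_of_le hd (hqd x))
    set F := levelFn n p α lam (dyadicCube n) w m0 v x
    calc F / (μ * (K * τ)) * (l v / 3)⁻¹ ^ (1 / q x)
        ≤ F / (μ * (K * τ)) * (τ * (l v)⁻¹ ^ (1 / q x)) := by gcongr
      _ = F / μ * (l v)⁻¹ ^ (1 / q x) / K * (τ⁻¹ * τ) := by
          simp only [div_eq_mul_inv]
          rw [ENNReal.mul_inv (Or.inr (by finiteness)) (Or.inr hKτ0),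
            ENNReal.mul_inv (Or.inl hK0) (Or.inl hK)]
          ring
      _ = F / μ * (l v)⁻¹ ^ (1 / q x) / K := by
          rw [ENNReal.inv_mul_cancel hτ0 hτt, mul_one]
  refine (ENNReal.tsum_le_tsum hterm).trans ?_
  simp only [div_eq_mul_inv]
  rw [ENNReal.tsum_mul_right, hl, ENNReal.tsum_add, tsum_geometric, ENNReal.one_sub_inv_two,
    inv_inv, ← div_eq_mul_inv]
  refine ENNReal.div_le_of_le_mul ?_
  calc ∑' v, s v + 2 ≤ 1 + 2 := by gcongr
    _ = 1 * 3 := by norm_num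

/-- for `α ∈ C_loc^log`, `p, q ∈ 𝒫₀^log` with `0 < q⁻ ≤ q⁺ < ∞`, `p⁻ > 1`,
and a family of measurable sets `E_{Q_{v,m}} ⊆ Q_{v,m}` with `|E_{Q_{v,m}}| > ε|Q_{v,m}|`,
the sequence norms built from the `χ_{E_{Q_{v,m}}}` are equivalent (with constants
independent of `λ` and the sets) to those built from the `χ_{Q_{v,m}}`. -/
theorem statement6 (n : ℕ) (hn : 1 ≤ n) (p q α : Rn n → ℝ)
    (hpmeas : Measurable p) (hqmeas : Measurable q) (hαmeas : Measurable α)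
    (hα : ∃ c : ℝ, 0 < c ∧ LocLogHolderWith n c α)
    (hp0 : ∃ c : ℝ, 0 < c ∧ ∀ x, c ≤ p x) (hq0 : ∃ c : ℝ, 0 < c ∧ ∀ x, c ≤ q x)
    (hplog : GlobLogHolder n fun x => 1 / p x)
    (hqlog : GlobLogHolder n fun x => 1 / q x)
    (qm qM : ℝ) (hqm : 0 < qm)
    (hq : ∀ᵐ x ∂(volume : Measure (Rn n)), qm ≤ q x ∧ q x ≤ qM)
    (pm : ℝ) (hpm1 : 1 < pm) (hpm : ∀ᵐ x ∂(volume : Measure (Rn n)), pm ≤ p x)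
    (ε : ℝ) (hε : 0 < ε) :
    ∃ c₁ c₂ : ℝ, 0 < c₁ ∧ 0 < c₂ ∧
      ∀ (lam : ℕ → (Fin n → ℤ) → ℂ) (E : ℕ → (Fin n → ℤ) → Set (Rn n)),
        (∀ v m, MeasurableSet (E v m)) → (∀ v m, E v m ⊆ dyadicCube n v m) →
        (∀ v m, ENNReal.ofReal ε * volume (dyadicCube n v m) < volume (E v m)) →
        ENNReal.ofReal c₁ * seqNormE n p q α lam (fun v m => dyadicCube n v m) ≤
            seqNormE n p q α lam E ∧
          seqNormE n p q α lam E ≤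
            ENNReal.ofReal c₂ * seqNormE n p q α lam (fun v m => dyadicCube n v m) := by
  have hpp : ∀ x, 0 < p x := fun x => by
    obtain ⟨c, hc, h⟩ := hp0
    exact hc.trans_le (h x)
  have hqp : ∀ x, 0 < q x := fun x => by
    obtain ⟨c, hc, h⟩ := hq0
    exact hc.trans_le (h x)
  obtain ⟨C, hC, hC1, H⟩ := exists_mixedNorm_le hn hp0 hq0 hα hplog hqlog.1 hε
  have hC0 : C ≠ 0 := (zero_lt_one.trans_le hC1).ne'
  refine ⟨C.toReal⁻¹, 1, inv_pos.2 (ENNReal.toReal_pos hC0 hC), one_pos, ?_⟩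
  intro lam E hEm hEQ hvol
  constructor
  · rw [ENNReal.ofReal_inv_of_pos (ENNReal.toReal_pos hC0 hC), ENNReal.ofReal_toReal hC, mul_comm,
      ← div_eq_mul_inv, ENNReal.div_le_iff_le_mul (Or.inl hC0) (Or.inl hC), mul_comm,
      seqNormE_eq, seqNormE_eq]
    refine iSup₂_le fun w m0 => (H lam E hEm hEQ hvol w m0).trans ?_
    gcongr
    exact le_iSup₂ (f := fun w m0 => mixedNorm n p q (levelFn n p α lam E w m0)) w m0
  · rw [ENNReal.ofReal_one, one_mul, seqNormE_eq, seqNormE_eq]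
    exact iSup₂_mono fun w m0 => mixedNorm_mono hpp hqp fun v x => levelFn_mono hEQ w m0 v x

end
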